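/- Let k be a symmetric positive definite kernel with RKHS H. If k is c-universal on a compact Hausdorff space X, or cc-universal on a locally compact Hausdorff space X (with k bounded and continuous on X × X), or c0-universal on a locally compact Hausdorff space X (with k bounded and k(·,x) ∈ C_0(X) for all x), then k is characteristic to the set of Radon probability measures contained in M_b(X), M_bc(X), or M_b(X), respectively; in particular the map P ↦ ∫_X k(·,x) dP(x) is injective on that set of probability measures. -/

import Mathlib

open MeasureTheory Filter Topology RealInnerProductSpace
open scoped ZeroAtInfty

open scoped CompactlySupported

/-- If the range of a bounded map `Φ` into a Hilbert space has trivial orthogonal complement and the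
Gram kernel of `Φ` is separately continuous, then `Φ` is weakly continuous. -/
theorem continuous_inner_of_continuous_gram {X H : Type*} [TopologicalSpace X]
    [NormedAddCommGroup H] [InnerProductSpace ℝ H] [CompleteSpace H] {Φ : X → H} {C : ℝ}
    (hC : ∀ x, ‖Φ x‖ ≤ C) (htotal : ∀ f : H, (∀ x, ⟪f, Φ x⟫ = 0) → f = 0)
    (hcont : ∀ x, Continuous fun y => ⟪Φ y, Φ x⟫) (f : H) :
    Continuous fun x => ⟪f, Φ x⟫ := by
  have hspan : ∀ g ∈ Submodule.span ℝ (Set.range Φ), Continuous fun x => ⟪g, Φ x⟫ := by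
    intro g hg
    induction hg using Submodule.span_induction with
    | mem g hg =>
      obtain ⟨x, rfl⟩ := hg
      simpa only [real_inner_comm] using hcont x
    | zero => simpa using continuous_const
    | add g h _ _ ihg ihh => simpa only [inner_add_left] using ihg.fun_add ihh
    | smul a g _ ih => simpa only [real_inner_smul_left] using ih.const_mul a
  have hdense : (Submodule.span ℝ (Set.range Φ)).topologicalClosure = ⊤ := by
    rw [Submodule.topologicalClosure_eq_top_iff, Submodule.eq_bot_iff]
    intro g hg
    refine htotal g fun x => ?_
    rw [real_inner_comm]
    exact hg _ (Submodule.subset_span ⟨x, rfl⟩)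
  have hf : f ∈ closure (Submodule.span ℝ (Set.range Φ) : Set H) := by
    rw [← Submodule.topologicalClosure_coe, hdense]
    trivial
  refine continuous_of_uniform_approx_of_continuous fun u hu => ?_
  obtain ⟨ε, hε, hu⟩ := Metric.mem_uniformity_dist.1 hu
  obtain ⟨g, hg, hfg⟩ := Metric.mem_closure_iff.1 hf (ε / (|C| + 1)) (by positivity)
  refine ⟨_, hspan g hg, fun x => hu ?_⟩
  rw [dist_eq_norm] at hfg ⊢
  rw [← inner_sub_left]
  calc ‖⟪f - g, Φ x⟫‖ ≤ ‖f - g‖ * ‖Φ x‖ := norm_inner_le_norm _ _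
    _ ≤ ‖f - g‖ * (|C| + 1) := by
      gcongr
      linarith [hC x, le_abs_self C]
    _ < ε := (lt_div_iff₀ (by positivity)).1 hfg

/-- An arbitrary union of null open sets is null for an inner regular measure. -/
theorem measure_biUnion_eq_zero_of_isOpen {X ι : Type*} [TopologicalSpace X] [MeasurableSpace X]
    [OpensMeasurableSpace X] {μ : Measure X} [μ.InnerRegular] {J : Set ι} {U : ι → Set X}
    (hU : ∀ i ∈ J, IsOpen (U i)) (hnull : ∀ i ∈ J, μ (U i) = 0) : μ (⋃ i ∈ J, U i) = 0 := by
  by_contra h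
  obtain ⟨K, hKU, hK, hpos⟩ := (isOpen_biUnion hU).measurableSet.exists_lt_isCompact
    (pos_iff_ne_zero.2 h)
  refine hpos.ne' (hK.measure_zero_of_nhdsWithin fun x hx => ?_)
  obtain ⟨i, hi, hxi⟩ := Set.mem_iUnion₂.1 (hKU hx)
  exact ⟨U i, mem_nhdsWithin_of_mem_nhds ((hU i hi).mem_nhds hxi), hnull i hi⟩

/-- A bounded weakly continuous map into a (possibly nonseparable) Hilbert space is almost
everywhere strongly measurable with respect to every finite inner regular measure. -/
theorem aestronglyMeasurable_of_continuous_inner {X H : Type*} [TopologicalSpace X]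
    [MeasurableSpace X] [BorelSpace X] [NormedAddCommGroup H] [InnerProductSpace ℝ H]
    [CompleteSpace H] {Φ : X → H} {C : ℝ} (hC : ∀ x, ‖Φ x‖ ≤ C)
    (hcont : ∀ f : H, Continuous fun x => ⟪f, Φ x⟫) (μ : Measure X) [IsFiniteMeasure μ]
    [μ.InnerRegular] : AEStronglyMeasurable Φ μ := by
  obtain ⟨w, b, -⟩ := exists_hilbertBasis ℝ H
  have hint : ∀ i, Integrable (fun x => ⟪b i, Φ x⟫ ^ 2) μ := by
    intro i
    refine Integrable.of_bound (((hcont (b i)).pow 2).aestronglyMeasurable) (C ^ 2)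
      (ae_of_all _ fun x => ?_)
    rw [norm_pow]
    gcongr
    calc ‖⟪b i, Φ x⟫‖ ≤ ‖b i‖ * ‖Φ x‖ := norm_inner_le_norm _ _
      _ ≤ C := by simpa [b.orthonormal.1 i] using hC x
  have hsummable : Summable fun i => ∫ x, ⟪b i, Φ x⟫ ^ 2 ∂μ := by
    refine summable_of_sum_le (c := ∫ _, C ^ 2 ∂μ)
      (fun i => integral_nonneg fun x => sq_nonneg _) fun s => ?_
    rw [← integral_finsetSum _ fun i _ => hint i]
    refine integral_mono (integrable_finsetSum _ fun i _ => hint i) (integrable_const _)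
      fun x => ?_
    calc ∑ i ∈ s, ⟪b i, Φ x⟫ ^ 2 = ∑ i ∈ s, ‖⟪b i, Φ x⟫‖ ^ 2 := by simp
      _ ≤ ‖Φ x‖ ^ 2 := b.orthonormal.sum_inner_products_le _
      _ ≤ C ^ 2 := by
        gcongr
        exact hC x
  set J : Set w := Function.support fun i => ∫ x, ⟪b i, Φ x⟫ ^ 2 ∂μ
  have : Countable J := hsummable.countable_support.to_subtype
  have hnull : μ (⋃ i ∈ Jᶜ, {x | ⟪b i, Φ x⟫ ≠ 0}) = 0 := by
    refine measure_biUnion_eq_zero_of_isOpen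
      (fun i _ => isOpen_ne_fun (hcont (b i)) continuous_const) fun i hi => ?_
    have hzero : ∫ x, ⟪b i, Φ x⟫ ^ 2 ∂μ = 0 := Function.notMem_support.1 hi
    rw [integral_eq_zero_iff_of_nonneg (fun x => sq_nonneg _) (hint i)] at hzero
    refine ae_iff.1 (hzero.mono fun x hx => ?_)
    simpa using hx
  refine aestronglyMeasurable_of_tendsto_ae (atTop : Filter (Finset J))
    (f := fun s x => ∑ i ∈ s, ⟪b i, Φ x⟫ • b i) (fun s => ?_) ?_
  · refine Finset.aestronglyMeasurable_fun_sum _ fun i _ => ?_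
    exact (hcont (b i)).aestronglyMeasurable.smul_const _
  · filter_upwards [measure_eq_zero_iff_ae_notMem.1 hnull] with x hx
    have hsum : HasSum (fun i => ⟪b i, Φ x⟫ • b i) (Φ x) := by
      simpa only [b.repr_apply_apply] using b.hasSum_repr (Φ x)
    refine (hasSum_subtype_iff_of_support_subset fun i hi => ?_).2 hsum
    by_contra hiJ
    refine hx (Set.mem_biUnion hiJ fun h0 => hi ?_)
    simp [h0]

/-- Two probability measures agree on the integral of a function that can be uniformly approximated
almost everywhere by functions on whose integrals they agree. -/
theorem integral_eq_of_forall_approx {X : Type*} [MeasurableSpace X] {P Q : Measure X}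
    [IsProbabilityMeasure P] [IsProbabilityMeasure Q] {g : X → ℝ} (hgP : Integrable g P)
    (hgQ : Integrable g Q)
    (happrox : ∀ ε : ℝ, 0 < ε → ∃ h : X → ℝ, Integrable h P ∧ Integrable h Q ∧
      ∫ x, h x ∂P = ∫ x, h x ∂Q ∧ (∀ᵐ x ∂P, |h x - g x| ≤ ε) ∧ ∀ᵐ x ∂Q, |h x - g x| ≤ ε) :
    ∫ x, g x ∂P = ∫ x, g x ∂Q := by
  refine eq_of_forall_dist_le fun ε hε => ?_
  obtain ⟨h, hhP, hhQ, heq, hP, hQ⟩ := happrox (ε / 2) (by positivity)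
  have key : ∀ μ : Measure X, IsProbabilityMeasure μ → Integrable h μ → Integrable g μ →
      (∀ᵐ x ∂μ, |h x - g x| ≤ ε / 2) → |∫ x, h x ∂μ - ∫ x, g x ∂μ| ≤ ε / 2 := by
    intro μ _ hh hg hle
    rw [← integral_sub hh hg]
    simpa using norm_integral_le_of_norm_le_const (μ := μ) (f := fun x => h x - g x) hle
  have h₁ := abs_le.1 (key P inferInstance hhP hgP hP)
  have h₂ := abs_le.1 (key Q inferInstance hhQ hgQ hQ)
  rw [Real.dist_eq, abs_le]
  constructor <;> linarith

/-- Two Radon probability measures with the same mean embedding under a bounded feature map coincide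
as soon as the functions `x ↦ ⟪f, Φ x⟫` approximate every compactly supported continuous function
uniformly almost everywhere. -/
theorem eq_of_integral_feature_eq {X H : Type*} [TopologicalSpace X] [T2Space X]
    [LocallyCompactSpace X] [MeasurableSpace X] [BorelSpace X] [NormedAddCommGroup H]
    [InnerProductSpace ℝ H] [CompleteSpace H] {T : H →ₗ[ℝ] (X → ℝ)} {Φ : X → H} {k : X → X → ℝ}
    (hinj : Function.Injective T) (hk : ∀ x y, k x y = ⟪Φ x, Φ y⟫)
    (hT : ∀ f x, T f x = ⟪f, Φ x⟫) (hbdd : ∃ C : ℝ, ∀ x y, |k x y| ≤ C)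
    (hcont : ∀ x, Continuous fun y => k y x) {P Q : Measure X} [IsProbabilityMeasure P]
    [IsProbabilityMeasure Q] [P.InnerRegular] [Q.InnerRegular]
    (happrox : ∀ (g : C_c(X, ℝ)) (ε : ℝ), 0 < ε →
      ∃ f : H, (∀ᵐ x ∂P, |T f x - g x| ≤ ε) ∧ ∀ᵐ x ∂Q, |T f x - g x| ≤ ε)
    (heq : ∫ x, Φ x ∂P = ∫ x, Φ x ∂Q) : P = Q := by
  obtain ⟨C, hC⟩ := hbdd
  have hnorm : ∀ x, ‖Φ x‖ ≤ √C := by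
    intro x
    refine Real.le_sqrt_of_sq_le ?_
    rw [← real_inner_self_eq_norm_sq, ← hk]
    exact (le_abs_self _).trans (hC x x)
  have hweak : ∀ f : H, Continuous fun x => ⟪f, Φ x⟫ := by
    refine continuous_inner_of_continuous_gram hnorm (fun f hf => hinj ?_) fun x => ?_
    · ext x
      simp [hT, hf x]
    · simpa only [hk] using hcont x
  have hint : ∀ (μ : Measure X) [IsProbabilityMeasure μ] [μ.InnerRegular], Integrable Φ μ :=
    fun μ _ _ => .of_bound (aestronglyMeasurable_of_continuous_inner hnorm hweak μ) _
      (ae_of_all _ hnorm)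
  refine Measure.ext_of_integral_eq_on_compactlySupported fun g => ?_
  have hg : ∀ (μ : Measure X) [IsProbabilityMeasure μ], Integrable g μ := fun μ _ =>
    g.continuous.integrable_of_hasCompactSupport g.hasCompactSupport
  refine integral_eq_of_forall_approx (hg P) (hg Q) fun ε hε => ?_
  obtain ⟨f, hfP, hfQ⟩ := happrox g ε hε
  have hTf : T f = fun x => ⟪f, Φ x⟫ := funext (hT f)
  refine ⟨T f, ?_, ?_, ?_, hfP, hfQ⟩
  · rw [hTf]
    exact (hint P).const_inner f
  · rw [hTf]
    exact (hint Q).const_inner f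
  · rw [hTf, integral_inner (hint P), integral_inner (hint Q), heq]

/-- If `k` is c-universal (compact Hausdorff `X`), cc-universal
(locally compact Hausdorff `X`, `k` bounded continuous), or c₀-universal (locally
compact Hausdorff `X`, `k` bounded with `k(·,x) ∈ C₀(X)`), then `k` is characteristic to
the set of Radon probability measures in `M_b(X)`, `M_bc(X)`, `M_b(X)` respectively,
i.e. `P ↦ ∫ k(·,x) dP(x) = ∫ Φ dP` is injective on that set of probability measures.
In each case the RKHS `H` of `k` is presented by an injective linear map
`T : H →ₗ[ℝ] (X → ℝ)` and a feature map `Φ` with `k x y = ⟪Φ x, Φ y⟫` and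
`T f x = ⟪f, Φ x⟫`. -/
theorem stmt13 :
    -- c-universal on a compact Hausdorff space ⇒ characteristic to Radon probability
    -- measures in M_b(X)
    (∀ (X : Type) [TopologicalSpace X] [CompactSpace X] [T2Space X]
        [MeasurableSpace X] [BorelSpace X]
        (k : X → X → ℝ), (Continuous fun p : X × X => k p.1 p.2) →
        ∀ (H : Type) [NormedAddCommGroup H] [InnerProductSpace ℝ H] [CompleteSpace H]
          (T : H →ₗ[ℝ] (X → ℝ)) (Φ : X → H),
          Function.Injective T →
          (∀ x y : X, k x y = ⟪Φ x, Φ y⟫) →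
          (∀ (f : H) (x : X), T f x = ⟪f, Φ x⟫) →
          (∀ (g : C(X, ℝ)) (ε : ℝ), 0 < ε → ∃ f : H, ∀ x : X, |T f x - g x| ≤ ε) →
          ∀ P Q : Measure X, IsProbabilityMeasure P → IsProbabilityMeasure Q →
            P.InnerRegular → Q.InnerRegular →
            (∫ x, Φ x ∂P) = (∫ x, Φ x ∂Q) → P = Q) ∧
    -- cc-universal on a locally compact Hausdorff space ⇒ characteristic to Radon
    -- probability measures in M_bc(X)
    (∀ (X : Type) [TopologicalSpace X] [T2Space X] [LocallyCompactSpace X]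
        [MeasurableSpace X] [BorelSpace X]
        (k : X → X → ℝ), (Continuous fun p : X × X => k p.1 p.2) →
        (∃ C : ℝ, ∀ x y : X, |k x y| ≤ C) →
        ∀ (H : Type) [NormedAddCommGroup H] [InnerProductSpace ℝ H] [CompleteSpace H]
          (T : H →ₗ[ℝ] (X → ℝ)) (Φ : X → H),
          Function.Injective T →
          (∀ x y : X, k x y = ⟪Φ x, Φ y⟫) →
          (∀ (f : H) (x : X), T f x = ⟪f, Φ x⟫) →
          (∀ (Z : Set X), IsCompact Z → ∀ (g : C(Z, ℝ)) (ε : ℝ), 0 < ε →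
            ∃ f : H, ∀ x : Z, |T f (x : X) - g x| ≤ ε) →
          ∀ P Q : Measure X, IsProbabilityMeasure P → IsProbabilityMeasure Q →
            P.InnerRegular → Q.InnerRegular →
            (∃ K : Set X, IsCompact K ∧ P Kᶜ = 0) →
            (∃ K : Set X, IsCompact K ∧ Q Kᶜ = 0) →
            (∫ x, Φ x ∂P) = (∫ x, Φ x ∂Q) → P = Q) ∧
    -- c₀-universal on a locally compact Hausdorff space ⇒ characteristic to Radon
    -- probability measures in M_b(X)
    (∀ (X : Type) [TopologicalSpace X] [T2Space X] [LocallyCompactSpace X]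
        [MeasurableSpace X] [BorelSpace X]
        (k : X → X → ℝ), (∃ C : ℝ, ∀ x y : X, |k x y| ≤ C) →
        (∀ x : X, Continuous (fun y => k y x) ∧
          Tendsto (fun y => k y x) (cocompact X) (𝓝 0)) →
        ∀ (H : Type) [NormedAddCommGroup H] [InnerProductSpace ℝ H] [CompleteSpace H]
          (T : H →ₗ[ℝ] (X → ℝ)) (Φ : X → H),
          Function.Injective T →
          (∀ x y : X, k x y = ⟪Φ x, Φ y⟫) →
          (∀ (f : H) (x : X), T f x = ⟪f, Φ x⟫) →
          (∀ (g : C₀(X, ℝ)) (ε : ℝ), 0 < ε → ∃ f : H, ∀ x : X, |T f x - g x| ≤ ε) →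
          ∀ P Q : Measure X, IsProbabilityMeasure P → IsProbabilityMeasure Q →
            P.InnerRegular → Q.InnerRegular →
            (∫ x, Φ x ∂P) = (∫ x, Φ x ∂Q) → P = Q) := by
  refine ⟨?_, ?_, ?_⟩
  · intro X _ _ _ _ _ k hk H _ _ _ T Φ hinj hkΦ hT huniv P Q _ _ _ _ heq
    refine eq_of_integral_feature_eq hinj hkΦ hT ?_ (fun x => by fun_prop) (fun g ε hε => ?_) heq
    · obtain ⟨C, hC⟩ := isCompact_univ.exists_bound_of_continuousOn hk.continuousOn
      exact ⟨C, fun x y => hC (x, y) trivial⟩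
    · obtain ⟨f, hf⟩ := huniv g ε hε
      exact ⟨f, ae_of_all _ hf, ae_of_all _ hf⟩
  · intro X _ _ _ _ _ k hk hbdd H _ _ _ T Φ hinj hkΦ hT huniv P Q _ _ _ _ hP hQ heq
    obtain ⟨K, hK, hPK⟩ := hP
    obtain ⟨L, hL, hQL⟩ := hQ
    refine eq_of_integral_feature_eq hinj hkΦ hT hbdd (fun x => by fun_prop)
      (fun g ε hε => ?_) heq
    obtain ⟨f, hf⟩ := huniv (K ∪ L) (hK.union hL) ((g : C(X, ℝ)).restrict (K ∪ L)) ε hε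
    refine ⟨f, ?_, ?_⟩
    · filter_upwards [mem_ae_iff.2 hPK] with x hx
      exact hf ⟨x, Or.inl hx⟩
    · filter_upwards [mem_ae_iff.2 hQL] with x hx
      exact hf ⟨x, Or.inr hx⟩
  · intro X _ _ _ _ _ k hbdd hk H _ _ _ T Φ hinj hkΦ hT huniv P Q _ _ _ _ heq
    refine eq_of_integral_feature_eq hinj hkΦ hT hbdd (fun x => (hk x).1)
      (fun g ε hε => ?_) heq
    obtain ⟨f, hf⟩ := huniv (g : C₀(X, ℝ)) ε hε
    exact ⟨f, ae_of_all _ hf, ae_of_all _ hf⟩
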